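/- Let M ≥ 2 and let μ̂_j = A_j y + b_j (j = 1,…,M) where every A_j is an orthoprojector (A_j = A_jᵀ = A_j²), with noise ξ having i.i.d. N(0,σ²) coordinates. Let σ̂² be any estimator (measurable function of y) and set δ = P(|σ² − σ̂²| > σ²/8); assume δ < 1. Let θ̂_σ̂ be any minimizer over the simplex Λ^M of W(θ) = ‖μ̂_θ‖² − 2yᵀμ̂_θ + 2σ̂² Tr(A_θ) + (1/2)pen(θ). Then for every x > 0, with probability at least 1 − δ − 2exp(−x), ‖μ̂_{θ̂_σ̂} − f‖² ≤ min_{j=1,…,M} ‖μ̂_j − f‖² + 64σ²(x + 2 log M). -/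

import Mathlib

open MeasureTheory ProbabilityTheory Finset

noncomputable section

/-- Squared Euclidean norm on `Fin n → ℝ`. -/
def sqNorm {n : ℕ} (v : Fin n → ℝ) : ℝ := ∑ i, (v i) ^ 2

/-- The simplex `Λ^M` of probability vectors in `ℝ^M`. -/
def simplex (M : ℕ) : Set (Fin M → ℝ) := {θ | (∀ j, 0 ≤ θ j) ∧ ∑ j, θ j = 1}

/-- Operator norm (ℓ²→ℓ²) of a square matrix. -/
def opNorm {n : ℕ} (A : Matrix (Fin n) (Fin n) ℝ) : ℝ :=
  sSup {c | ∃ x : Fin n → ℝ, sqNorm x ≤ 1 ∧ c = Real.sqrt (sqNorm (A.mulVec x))}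

/-- The distribution of a vector with i.i.d. `N(0,σ²)` coordinates. -/
def gaussPi (n : ℕ) (σ : ℝ) : Measure (Fin n → ℝ) :=
  Measure.pi fun _ => gaussianReal 0 ⟨σ ^ 2, sq_nonneg σ⟩

/-- The aggregated affine estimator `μ̂_θ = A_θ y + b_θ = ∑_j θ_j (A_j y + b_j)`. -/
def muV {n M : ℕ} (A : Fin M → Matrix (Fin n) (Fin n) ℝ) (b : Fin M → Fin n → ℝ)
    (y : Fin n → ℝ) (θ : Fin M → ℝ) : Fin n → ℝ :=
  ∑ j, θ j • ((A j).mulVec y + b j)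

/-- Mallows' `C_p` criterion. -/
def Cp {n M : ℕ} (A : Fin M → Matrix (Fin n) (Fin n) ℝ) (b : Fin M → Fin n → ℝ)
    (σ : ℝ) (y : Fin n → ℝ) (θ : Fin M → ℝ) : ℝ :=
  sqNorm (muV A b y θ) - 2 * ∑ i, y i * muV A b y θ i
    + 2 * σ ^ 2 * ∑ j, θ j * (A j).trace

/-- The penalty `pen(θ) = ∑_j θ_j ‖μ̂_θ - μ̂_j‖²`. -/
def pen {n M : ℕ} (A : Fin M → Matrix (Fin n) (Fin n) ℝ) (b : Fin M → Fin n → ℝ)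
    (y : Fin n → ℝ) (θ : Fin M → ℝ) : ℝ :=
  ∑ j, θ j * sqNorm (muV A b y θ - ((A j).mulVec y + b j))

/-- The penalized criterion `H_pen(θ) = C_p(θ) + pen(θ)/2`. -/
def Hpen {n M : ℕ} (A : Fin M → Matrix (Fin n) (Fin n) ℝ) (b : Fin M → Fin n → ℝ)
    (σ : ℝ) (y : Fin n → ℝ) (θ : Fin M → ℝ) : ℝ :=
  Cp A b σ y θ + pen A b y θ / 2

/-- The criterion `W(θ)` where the true variance is replaced by an estimate `σ̂²`. -/
def Wfun {n M : ℕ} (A : Fin M → Matrix (Fin n) (Fin n) ℝ) (b : Fin M → Fin n → ℝ)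
    (σ2hat : ℝ) (y : Fin n → ℝ) (θ : Fin M → ℝ) : ℝ :=
  sqNorm (muV A b y θ) - 2 * ∑ i, y i * muV A b y θ i
    + 2 * σ2hat * ∑ j, θ j * (A j).trace + pen A b y θ / 2


lemma oneD_poly (β : ℝ) (h1 : -1 ≤ β) (h2 : β ≤ 1) :
    Real.exp (-(4 * β - β ^ 2 / 2) / 64) ≤ 1 - (4 * β - β ^ 2) / 64 := by
  set z := -(4 * β - β ^ 2 / 2) / 64 with hz
  have e1 : 1 - z / 2 ≤ Real.exp (-(z / 2)) := by
    have := Real.add_one_le_exp (-(z/2)); linarith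
  have e0 : 0 < 1 - z / 2 := by rw [hz]; nlinarith
  have e2 : (1 - z / 2) ^ 2 ≤ Real.exp (-z) := by
    have : Real.exp (-z) = Real.exp (-(z / 2)) ^ 2 := by
      rw [← Real.exp_nat_mul]; congr 1; push_cast; ring
    rw [this]; exact pow_le_pow_left₀ e0.le e1 2
  have e3 : 1 ≤ (1 - (4 * β - β ^ 2) / 64) * (1 - z / 2) ^ 2 := by
    have h : (1 - (4 * β - β ^ 2) / 64) * (1 - z / 2) ^ 2 - 1
      = β ^ 2 * (5 / 1024 + 19 / 16384 * β - 5 / 65536 * β ^ 2 - 5 / 1048576 * β ^ 3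
        + 1 / 4194304 * β ^ 4) := by rw [hz]; ring
    have hb2 : β ^ 2 ≤ 1 := by nlinarith
    have hb3 : β ^ 3 ≤ 1 := by nlinarith
    have hb4 : 0 ≤ β ^ 4 := by positivity
    have := mul_nonneg (sq_nonneg β) (show 0 ≤ (5 / 1024 + 19 / 16384 * β - 5 / 65536 * β ^ 2
        - 5 / 1048576 * β ^ 3 + 1 / 4194304 * β ^ 4) by linarith)
    linarith
  have hpos : 0 < 1 - (4 * β - β ^ 2) / 64 := by nlinarith
  have hee : Real.exp z * Real.exp (-z) = 1 := by rw [← Real.exp_add]; simp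
  have h3 := Real.exp_pos z
  have h4 := Real.exp_pos (-z)
  by_contra hc
  push Not at hc
  have : (1 - (4 * β - β ^ 2) / 64) * Real.exp (-z) < 1 := by
    have := mul_lt_mul_of_pos_right hc h4
    linarith
  have := mul_le_mul_of_nonneg_left e2 hpos.le
  linarith

lemma oneD (β w : ℝ) (h1 : -1 ≤ β) (h2 : β ≤ 1) :
    Integrable (fun g : ℝ => Real.exp (1 / 64 * (2 * β * g ^ 2 + 2 * g * w - 2 * β
      - 1 / 2 * (β * g + w) ^ 2 + 1 / 4 * β ^ 2))) (gaussianReal 0 1) ∧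
    ∫ g, Real.exp (1 / 64 * (2 * β * g ^ 2 + 2 * g * w - 2 * β
      - 1 / 2 * (β * g + w) ^ 2 + 1 / 4 * β ^ 2)) ∂(gaussianReal 0 1) ≤ 1 := by
  set B := 1 / 2 - (2 * β - β ^ 2 / 2) / 64 with hB
  have hBpos : 0 < B := by rw [hB]; nlinarith
  have h2B : 2 * B = 1 - (4 * β - β ^ 2) / 64 := by rw [hB]; ring
  set c := (2 - β) * w / 64 with hc
  set d := (-2 * β + β ^ 2 / 4 - w ^ 2 / 2) / 64 with hd
  have key : ∀ g : ℝ, gaussianPDFReal 0 1 g • Real.exp (1 / 64 * (2 * β * g ^ 2 + 2 * g * w - 2 * β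
      - 1 / 2 * (β * g + w) ^ 2 + 1 / 4 * β ^ 2)) =
      ((√(2 * Real.pi))⁻¹ * Real.exp (d + c ^ 2 / (4 * B))) *
        Real.exp (-B * (g - c / (2 * B)) ^ 2) := by
    intro g
    rw [gaussianPDFReal]
    simp only [smul_eq_mul, NNReal.coe_one, mul_one, sub_zero]
    rw [mul_assoc (√(2 * Real.pi))⁻¹, mul_assoc (√(2 * Real.pi))⁻¹, ← Real.exp_add, ← Real.exp_add]
    congr 2
    have : d + c ^ 2 / (4 * B) + -B * (g - c / (2 * B)) ^ 2 = d - B * g ^ 2 + c * g := by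
      field_simp; ring
    rw [this, hd, hB, hc]; ring
  have hint : Integrable (fun g : ℝ => Real.exp (-B * (g - c / (2 * B)) ^ 2)) :=
    (integrable_exp_neg_mul_sq hBpos).comp_sub_right (c / (2 * B))
  constructor
  · rw [gaussianReal_of_var_ne_zero _ (by norm_num)]
    unfold gaussianPDF
    rw [integrable_withDensity_iff_integrable_smul₀']
    · refine (hint.const_mul ((√(2 * Real.pi))⁻¹ * Real.exp (d + c ^ 2 / (4 * B)))).congr ?_
      filter_upwards with g
      rw [← key g, ENNReal.toReal_ofReal (gaussianPDFReal_nonneg _ _ _)]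
    · exact (measurable_gaussianPDF 0 1).aemeasurable
    · filter_upwards with g; exact ENNReal.ofReal_lt_top
  · rw [integral_gaussianReal_eq_integral_smul (by norm_num)]
    simp_rw [key]
    rw [integral_const_mul, integral_sub_right_eq_self (fun g => Real.exp (-B * g ^ 2)),
      integral_gaussian]
    have hexp : Real.exp (d + c ^ 2 / (4 * B)) ≤ √(2 * B) := by
      apply Real.le_sqrt_of_sq_le
      rw [← Real.exp_nat_mul, h2B]
      refine le_trans (Real.exp_le_exp.2 ?_) (oneD_poly β h1 h2)
      have : c ^ 2 / (4 * B) ≤ w ^ 2 / 128 := by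
        rw [div_le_iff₀ (by positivity), hc, hB]
        have : 0 ≤ w ^ 2 * (4 * (1 / 2 - (2 * β - β ^ 2 / 2) / 64) * 32 - (2 - β) ^ 2) := by
          apply mul_nonneg (sq_nonneg _); nlinarith
        nlinarith
      rw [hd]; push_cast; linarith
    calc _ ≤ (√(2 * Real.pi))⁻¹ * √(2 * B) * √(Real.pi / B) := by gcongr
      _ = (√(2 * Real.pi))⁻¹ * √(2 * Real.pi) := by
        rw [mul_assoc, ← Real.sqrt_mul (by positivity)]; congr 2; field_simp
      _ = 1 := inv_mul_cancel₀ (by positivity)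
      _ ≤ 1 := le_rfl

lemma exists_diag {n : ℕ} (B : Matrix (Fin n) (Fin n) ℝ) (hB : B.transpose = B) :
    ∃ (U : Matrix (Fin n) (Fin n) ℝ) (β : Fin n → ℝ), U * U.transpose = 1 ∧ U.transpose * U = 1 ∧
      U.transpose * B * U = Matrix.diagonal β ∧
      (Measure.pi fun _ : Fin n => gaussianReal 0 1).map (fun x => U.mulVec x) =
        Measure.pi fun _ : Fin n => gaussianReal 0 1 := by
  have hH : B.IsHermitian := by
    rw [Matrix.IsHermitian, Matrix.conjTranspose_eq_transpose_of_trivial, hB]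
  refine ⟨hH.eigenvectorUnitary, hH.eigenvalues, ?_, ?_, ?_, ?_⟩
  · have := (Matrix.mem_unitaryGroup_iff).1 hH.eigenvectorUnitary.2
    rwa [Matrix.star_eq_conjTranspose, Matrix.conjTranspose_eq_transpose_of_trivial] at this
  · have := (Matrix.mem_unitaryGroup_iff').1 hH.eigenvectorUnitary.2
    rwa [Matrix.star_eq_conjTranspose, Matrix.conjTranspose_eq_transpose_of_trivial] at this
  · have := hH.conjStarAlgAut_star_eigenvectorUnitary
    rw [Unitary.conjStarAlgAut_star_apply, Matrix.star_eq_conjTranspose,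
      Matrix.conjTranspose_eq_transpose_of_trivial] at this
    exact this
  · have h1 := stdGaussian_eq_map_pi_orthonormalBasis hH.eigenvectorBasis
    rw [← map_pi_eq_stdGaussian] at h1
    have h2 := congrArg (fun m => Measure.map (WithLp.ofLp : EuclideanSpace ℝ (Fin n) → _) m) h1
    simp only at h2
    rw [Measure.map_map (by fun_prop) (by fun_prop), Measure.map_map (by fun_prop) (by fun_prop)] at h2
    have h3 : (WithLp.ofLp : EuclideanSpace ℝ (Fin n) → _) ∘ (WithLp.toLp 2) = id := by
      ext; simp
    rw [h3, Measure.map_id] at h2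
    rw [h2]
    nth_rewrite 2 [h2]
    rw [← h2]
    congr 1
    ext x i
    simp [Matrix.mulVec, dotProduct, mul_comm]

/-- the quadratic functional -/
def qf {n : ℕ} (B : Matrix (Fin n) (Fin n) ℝ) (u : Fin n → ℝ) (g : Fin n → ℝ) : ℝ :=
  2 * (g ⬝ᵥ (B.mulVec g + u)) - 2 * B.trace - 1 / 2 * sqNorm (B.mulVec g + u)
    + 1 / 4 * (B * B).trace

lemma sqNorm_eq_dot {n : ℕ} (v : Fin n → ℝ) : sqNorm v = v ⬝ᵥ v := by
  simp [sqNorm, dotProduct, sq]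

lemma measurable_qf {n : ℕ} (B : Matrix (Fin n) (Fin n) ℝ) (u : Fin n → ℝ) :
    Measurable (qf B u) := by
  unfold qf sqNorm dotProduct Matrix.mulVec dotProduct
  simp only [Pi.add_apply]
  fun_prop

lemma proj_diag {n : ℕ} (A : Matrix (Fin n) (Fin n) ℝ) (h1 : A.transpose = A) (h2 : A * A = A)
    (i : Fin n) : 0 ≤ A i i ∧ A i i ≤ 1 := by
  have h : A i i = ∑ k, A i k ^ 2 := by
    conv_lhs => rw [← h2]
    rw [Matrix.mul_apply]
    refine Finset.sum_congr rfl fun k _ => ?_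
    have : A k i = A i k := by
      have := congrFun (congrFun h1 i) k
      simpa using this
    rw [this, sq]
  have h3 : A i i ^ 2 ≤ A i i := by
    conv_rhs => rw [h]
    exact Finset.single_le_sum (f := fun k => A i k ^ 2) (fun k _ => sq_nonneg _) (Finset.mem_univ i)
  constructor <;> nlinarith

lemma trace_bound {n : ℕ} (A C : Matrix (Fin n) (Fin n) ℝ)
    (hA : A.transpose = A ∧ A * A = A) (hC : C.transpose = C ∧ C * C = C) :
    (A - C).trace ≤ ((A - C) * (A - C)).trace := by
  have h : 0 ≤ (((1 - A) * C).transpose * ((1 - A) * C)).trace := by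
    rw [Matrix.trace]
    refine Finset.sum_nonneg fun i _ => ?_
    rw [Matrix.diag_apply, Matrix.mul_apply]
    exact Finset.sum_nonneg fun k _ => mul_self_nonneg _
  have e : ((1 - A) * C).transpose * ((1 - A) * C) = C * C - C * A * C := by
    rw [Matrix.transpose_mul, Matrix.transpose_sub, hA.1, hC.1, Matrix.transpose_one]
    have : C * (1 - A) * ((1 - A) * C) = C * C - C * A * C - (C * A * C - C * (A * A) * C) := by
      noncomm_ring
    rw [this, hA.2]; simp
  rw [e, Matrix.trace_sub, Matrix.mul_assoc, Matrix.trace_mul_comm C (A * C), Matrix.mul_assoc, hC.2] at h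
  have e2 : (A - C) * (A - C) = A * A - A * C - C * A + C * C := by noncomm_ring
  rw [e2, hA.2, hC.2, Matrix.trace_add, Matrix.trace_sub, Matrix.trace_sub, Matrix.trace_sub,
    Matrix.trace_mul_comm C A]
  linarith

lemma core {n : ℕ} (A C : Matrix (Fin n) (Fin n) ℝ)
    (hA : A.transpose = A ∧ A * A = A) (hC : C.transpose = C ∧ C * C = C) (u : Fin n → ℝ) :
    ∫⁻ g, ENNReal.ofReal (Real.exp (1 / 64 * qf (A - C) u g))
      ∂(Measure.pi fun _ : Fin n => gaussianReal 0 1) ≤ 1 := by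
  obtain ⟨U, β, hU1, hU2, hD, hmap⟩ := exists_diag (A - C)
    (by rw [Matrix.transpose_sub, hA.1, hC.1])
  set B := A - C with hBdef
  have hβ : ∀ i, -1 ≤ β i ∧ β i ≤ 1 := by
    intro i
    have conj : ∀ X : Matrix (Fin n) (Fin n) ℝ, (X.transpose = X ∧ X * X = X) →
        0 ≤ (U.transpose * X * U) i i ∧ (U.transpose * X * U) i i ≤ 1 := by
      intro X hX
      apply proj_diag
      · simp [Matrix.transpose_mul, hX.1, Matrix.mul_assoc]
      · calc _ = U.transpose * X * (U * U.transpose) * X * U := by noncomm_ring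
          _ = _ := by rw [hU1, Matrix.mul_one, Matrix.mul_assoc U.transpose, hX.2]
    have h1 := conj A hA
    have h2 := conj C hC
    have : β i = (U.transpose * A * U) i i - (U.transpose * C * U) i i := by
      rw [← Matrix.sub_apply, ← Matrix.sub_mul, ← Matrix.mul_sub, ← hBdef, hD]; simp
    constructor <;> linarith
  set w := U.transpose.mulVec u with hw
  have hBU : B = U * Matrix.diagonal β * U.transpose := by
    rw [← hD]
    calc B = (U * U.transpose) * B * (U * U.transpose) := by rw [hU1]; simp
      _ = _ := by noncomm_ring
  have hdot : ∀ a c : Fin n → ℝ, U.mulVec a ⬝ᵥ U.mulVec c = a ⬝ᵥ c := by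
    intro a c
    rw [Matrix.dotProduct_mulVec, Matrix.vecMul_mulVec, hU2]; simp
  have hq : ∀ h, qf B u (U.mulVec h) = ∑ i, (2 * β i * (h i) ^ 2 + 2 * h i * w i - 2 * β i
      - 1 / 2 * (β i * h i + w i) ^ 2 + 1 / 4 * β i ^ 2) := by
    intro h
    have e1 : B.mulVec (U.mulVec h) + u = U.mulVec ((Matrix.diagonal β).mulVec h + w) := by
      rw [Matrix.mulVec_add, hw, Matrix.mulVec_mulVec, Matrix.mulVec_mulVec, Matrix.mulVec_mulVec,
        hU1, Matrix.one_mulVec]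
      congr 2
      rw [hBU, Matrix.mul_assoc, hU2, Matrix.mul_one]
    have e2 : B.trace = ∑ i, β i := by
      rw [hBU, Matrix.trace_mul_comm, ← Matrix.mul_assoc, hU2, Matrix.one_mul, Matrix.trace_diagonal]
    have e3 : (B * B).trace = ∑ i, β i ^ 2 := by
      have : B * B = U * (Matrix.diagonal β * Matrix.diagonal β) * U.transpose := by
        rw [hBU]
        calc _ = U * Matrix.diagonal β * (U.transpose * U) * Matrix.diagonal β * U.transpose := by
              noncomm_ring
          _ = _ := by rw [hU2]; noncomm_ring
      rw [this, Matrix.trace_mul_comm, ← Matrix.mul_assoc, hU2, Matrix.one_mul,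
        Matrix.diagonal_mul_diagonal, Matrix.trace_diagonal]
      simp [sq]
    rw [qf, sqNorm_eq_dot, e1, hdot, hdot, e2, e3]
    simp only [dotProduct, Finset.mul_sum, ← Finset.sum_add_distrib, ← Finset.sum_sub_distrib]
    refine Finset.sum_congr rfl fun i _ => ?_
    simp only [Pi.add_apply, Matrix.mulVec_diagonal]
    ring
  rw [← hmap, lintegral_map ((measurable_qf B u).const_mul _ |>.exp.ennreal_ofReal)
    (by unfold Matrix.mulVec dotProduct; fun_prop)]
  set F : Fin n → ℝ → ℝ := fun i g => Real.exp (1 / 64 * (2 * β i * g ^ 2 + 2 * g * w i - 2 * β i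
      - 1 / 2 * (β i * g + w i) ^ 2 + 1 / 4 * β i ^ 2)) with hF
  have hprod : ∀ h, Real.exp (1 / 64 * qf B u (U.mulVec h)) = ∏ i, F i (h i) := by
    intro h
    rw [hq, Finset.mul_sum, Real.exp_sum]
  simp_rw [hprod]
  have hone := fun i => oneD (β i) (w i) (hβ i).1 (hβ i).2
  rw [← ofReal_integral_eq_lintegral_ofReal (Integrable.fintype_prod fun i => (hone i).1)
    (ae_of_all _ fun h => Finset.prod_nonneg fun i _ => (Real.exp_pos _).le),
    integral_fintype_prod_eq_prod F]
  rw [← ENNReal.ofReal_one]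
  apply ENNReal.ofReal_le_ofReal
  exact Finset.prod_le_one (fun i _ => integral_nonneg fun g => (Real.exp_pos _).le)
    fun i _ => (hone i).2

lemma std_tail {n : ℕ} (A C : Matrix (Fin n) (Fin n) ℝ)
    (hA : A.transpose = A ∧ A * A = A) (hC : C.transpose = C ∧ C * C = C) (u : Fin n → ℝ) (s : ℝ) :
    (Measure.pi fun _ : Fin n => gaussianReal 0 1) {g | 64 * s < qf (A - C) u g}
      ≤ ENNReal.ofReal (Real.exp (-s)) := by
  set γ := (Measure.pi fun _ : Fin n => gaussianReal 0 1)
  have h := (mul_meas_ge_le_lintegral (μ := γ) ((measurable_qf (A - C) u).const_mul (1 / 64)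
    |>.exp.ennreal_ofReal) (ENNReal.ofReal (Real.exp s))).trans (core A C hA hC u)
  have hsub : {g | 64 * s < qf (A - C) u g} ⊆
      {g | ENNReal.ofReal (Real.exp s) ≤ ENNReal.ofReal (Real.exp (1 / 64 * qf (A - C) u g))} := by
    intro g hg
    apply ENNReal.ofReal_le_ofReal
    apply Real.exp_le_exp.2
    simp only [Set.mem_ofPred_eq] at hg
    linarith
  refine (measure_mono hsub).trans ?_
  rw [Real.exp_neg, ENNReal.ofReal_inv_of_pos (Real.exp_pos _), ← one_div]
  rw [ENNReal.le_div_iff_mul_le (Or.inl (by simp [Real.exp_pos])) (Or.inl (by simp)), mul_comm]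
  exact h

/-- the rescaled quadratic functional -/
def qs {n : ℕ} (σ : ℝ) (B : Matrix (Fin n) (Fin n) ℝ) (v : Fin n → ℝ) (ξ : Fin n → ℝ) : ℝ :=
  2 * (ξ ⬝ᵥ (B.mulVec ξ + v)) - 2 * σ ^ 2 * B.trace - 1 / 2 * sqNorm (B.mulVec ξ + v)
    + σ ^ 2 / 4 * (B * B).trace

lemma measurable_qs {n : ℕ} (σ : ℝ) (B : Matrix (Fin n) (Fin n) ℝ) (u : Fin n → ℝ) :
    Measurable (qs σ B u) := by
  unfold qs sqNorm dotProduct Matrix.mulVec dotProduct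
  simp only [Pi.add_apply]
  fun_prop

lemma gaussPi_eq (n : ℕ) (σ : ℝ) : gaussPi n σ =
    (Measure.pi fun _ : Fin n => gaussianReal 0 1).map (fun g => σ • g) := by
  have h := Measure.pi_map_pi (μ := fun _ : Fin n => gaussianReal 0 1) (f := fun _ x => σ * x)
    (fun _ => by fun_prop)
  have h' : (fun g : Fin n → ℝ => σ • g) = fun x i => σ * x i := by ext; simp
  rw [h', h, gaussPi]
  simp [gaussianReal_map_const_mul]
  rfl

lemma gauss_tail {n : ℕ} (σ : ℝ) (A C : Matrix (Fin n) (Fin n) ℝ)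
    (hA : A.transpose = A ∧ A * A = A) (hC : C.transpose = C ∧ C * C = C) (v : Fin n → ℝ) (s : ℝ) :
    gaussPi n σ {ξ | 64 * σ ^ 2 * s < qs σ (A - C) v ξ} ≤ ENNReal.ofReal (Real.exp (-s)) := by
  rw [gaussPi_eq, Measure.map_apply (by fun_prop)
    (measurableSet_lt measurable_const (measurable_qs σ _ v))]
  by_cases hσ : σ = 0
  · subst hσ
    have : (fun g : Fin n → ℝ => (0 : ℝ) • g) ⁻¹' {ξ | 64 * (0 : ℝ) ^ 2 * s < qs 0 (A - C) v ξ} = ∅ := by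
      ext g
      have : 0 ≤ sqNorm v := Finset.sum_nonneg fun _ _ => sq_nonneg _
      simp [qs]
      linarith
    rw [this]; simp
  · refine (measure_mono ?_).trans (std_tail A C hA hC (σ⁻¹ • v) s)
    intro g hg
    simp only [Set.mem_preimage, Set.mem_ofPred_eq] at hg ⊢
    have hv : v = σ • (σ⁻¹ • v) := by rw [smul_smul, mul_inv_cancel₀ hσ, one_smul]
    have e : qs σ (A - C) v (σ • g) = σ ^ 2 * qf (A - C) (σ⁻¹ • v) g := by
      conv_lhs => rw [hv]
      rw [qs, qf, sqNorm_eq_dot, sqNorm_eq_dot, Matrix.mulVec_smul, ← smul_add]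
      simp only [smul_dotProduct, dotProduct_smul, smul_eq_mul]
      ring
    rw [e] at hg
    have : 0 < σ ^ 2 := by positivity
    nlinarith

lemma dot_muV {n M : ℕ} (A : Fin M → Matrix (Fin n) (Fin n) ℝ) (b : Fin M → Fin n → ℝ)
    (y z : Fin n → ℝ) (θ : Fin M → ℝ) :
    z ⬝ᵥ muV A b y θ = ∑ j, θ j * (z ⬝ᵥ ((A j).mulVec y + b j)) := by
  simp only [muV, dotProduct_sum, dotProduct_smul, smul_eq_mul]

lemma sqNorm_sub {n : ℕ} (u v : Fin n → ℝ) :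
    sqNorm (u - v) = sqNorm u - 2 * (u ⬝ᵥ v) + sqNorm v := by
  simp only [sqNorm_eq_dot, sub_dotProduct, dotProduct_sub, dotProduct_comm v u]
  ring

lemma W_eq {n M : ℕ} (A : Fin M → Matrix (Fin n) (Fin n) ℝ) (b : Fin M → Fin n → ℝ)
    (s : ℝ) (y : Fin n → ℝ) (θ : Fin M → ℝ) (hθ : θ ∈ simplex M) :
    Wfun A b s y θ = 1 / 2 * sqNorm (muV A b y θ) + ∑ j, θ j *
      (-2 * (y ⬝ᵥ ((A j).mulVec y + b j)) + 2 * s * (A j).trace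
        + 1 / 2 * sqNorm ((A j).mulVec y + b j)) := by
  have hp : pen A b y θ = ∑ j, θ j * sqNorm ((A j).mulVec y + b j) - sqNorm (muV A b y θ) := by
    have e : ∀ j, θ j * sqNorm (muV A b y θ - ((A j).mulVec y + b j)) =
        θ j * sqNorm (muV A b y θ) - 2 * (θ j * (muV A b y θ ⬝ᵥ ((A j).mulVec y + b j)))
          + θ j * sqNorm ((A j).mulVec y + b j) := by
      intro j; rw [sqNorm_sub]; ring
    simp only [pen, e, Finset.sum_add_distrib, Finset.sum_sub_distrib]
    rw [← Finset.sum_mul, hθ.2, ← Finset.mul_sum, ← dot_muV, ← sqNorm_eq_dot]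
    ring
  have hy : ∑ i, y i * muV A b y θ i = ∑ j, θ j * (y ⬝ᵥ ((A j).mulVec y + b j)) := dot_muV ..
  rw [Wfun, hp, hy]
  have e : ∀ j, θ j * (-2 * (y ⬝ᵥ ((A j).mulVec y + b j)) + 2 * s * (A j).trace
        + 1 / 2 * sqNorm ((A j).mulVec y + b j)) =
      -2 * (θ j * (y ⬝ᵥ ((A j).mulVec y + b j))) + 2 * s * (θ j * (A j).trace)
        + 1 / 2 * (θ j * sqNorm ((A j).mulVec y + b j)) := by intro j; ring
  simp only [e, Finset.sum_add_distrib, ← Finset.mul_sum]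
  ring

lemma first_order {n M : ℕ} (A : Fin M → Matrix (Fin n) (Fin n) ℝ) (b : Fin M → Fin n → ℝ)
    (s : ℝ) (y : Fin n → ℝ) (θ : Fin M → ℝ) (hθ : θ ∈ simplex M)
    (hmin : ∀ θ' ∈ simplex M, Wfun A b s y θ ≤ Wfun A b s y θ') (j : Fin M) :
    Wfun A b s y θ + 1 / 2 * sqNorm (muV A b y θ - ((A j).mulVec y + b j)) ≤
      -2 * (y ⬝ᵥ ((A j).mulVec y + b j)) + 2 * s * (A j).trace
        + sqNorm ((A j).mulVec y + b j) := by
  set m := (A j).mulVec y + b j with hm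
  set ℓ : Fin M → ℝ := fun j => (-2 * (y ⬝ᵥ ((A j).mulVec y + b j)) + 2 * s * (A j).trace
        + 1 / 2 * sqNorm ((A j).mulVec y + b j)) with hℓ
  set D := sqNorm (muV A b y θ - m) with hD
  have hD0 : 0 ≤ D := Finset.sum_nonneg fun _ _ => sq_nonneg _
  have key : ∀ t : ℝ, 0 < t → t ≤ 1 →
      Wfun A b s y θ + 1 / 2 * (1 - t) * D ≤ ℓ j + 1 / 2 * sqNorm m := by
    intro t ht ht1
    set θ' : Fin M → ℝ := fun k => (1 - t) * θ k + t * (if k = j then 1 else 0) with hθ'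
    have hmem : θ' ∈ simplex M := by
      refine ⟨fun k => ?_, ?_⟩
      · have := hθ.1 k
        have : 0 ≤ 1 - t := by linarith
        simp only [hθ']
        split_ifs <;> positivity
      · simp only [hθ', Finset.sum_add_distrib, ← Finset.mul_sum, hθ.2]
        simp
    have hmu : muV A b y θ' = (1 - t) • muV A b y θ + t • m := by
      simp only [muV, hθ', add_smul, Finset.sum_add_distrib, Finset.smul_sum, mul_smul]
      congr 1
      rw [← Finset.smul_sum]
      congr 1
      simp only [ite_smul, one_smul, zero_smul, Finset.sum_ite_eq', Finset.mem_univ, if_true, hm]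
    have hl : ∑ k, θ' k * ℓ k = (1 - t) * ∑ k, θ k * ℓ k + t * ℓ j := by
      simp only [hθ', add_mul, Finset.sum_add_distrib, mul_assoc, ← Finset.mul_sum]
      simp
    have h := hmin θ' hmem
    have w1 := W_eq A b s y θ hθ
    have w2 := W_eq A b s y θ' hmem
    change _ = 1 / 2 * _ + ∑ k, θ k * ℓ k at w1
    change _ = 1 / 2 * _ + ∑ k, θ' k * ℓ k at w2
    have hn : sqNorm (muV A b y θ') = (1 - t) * sqNorm (muV A b y θ) + t * sqNorm m
        - t * (1 - t) * D := by
      rw [hD, sqNorm_sub, hmu]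
      simp only [sqNorm_eq_dot, add_dotProduct, dotProduct_add, smul_dotProduct, dotProduct_smul,
        smul_eq_mul, dotProduct_comm m]
      ring
    have : t * (Wfun A b s y θ + 1 / 2 * (1 - t) * D) ≤ t * (ℓ j + 1 / 2 * sqNorm m) := by
      rw [w2, hl, hn] at h
      nlinarith
    exact le_of_mul_le_mul_left this ht
  have goal : Wfun A b s y θ + 1 / 2 * D ≤ ℓ j + 1 / 2 * sqNorm m := by
    by_contra hc
    push Not at hc
    set e := Wfun A b s y θ + 1 / 2 * D - (ℓ j + 1 / 2 * sqNorm m) with he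
    have hepos : 0 < e := by linarith
    have hden : 0 < D + e := by linarith
    have h := key (e / (D + e)) (by positivity) (by rw [div_le_one hden]; linarith)
    have h2 : e / (D + e) * D < 2 * e := by
      rw [div_mul_eq_mul_div, div_lt_iff₀ hden]; nlinarith
    linarith
  have : ℓ j = -2 * (y ⬝ᵥ m) + 2 * s * (A j).trace + 1 / 2 * sqNorm m := rfl
  linarith

lemma deterministic {n M : ℕ} (σ : ℝ) (f ξ : Fin n → ℝ)
    (A : Fin M → Matrix (Fin n) (Fin n) ℝ) (b : Fin M → Fin n → ℝ)
    (hproj : ∀ j, Matrix.transpose (A j) = A j ∧ A j * A j = A j)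
    (s : ℝ) (hs : |σ ^ 2 - s| ≤ σ ^ 2 / 8)
    (θ : Fin M → ℝ) (hθ : θ ∈ simplex M)
    (hmin : ∀ θ' ∈ simplex M, Wfun A b s (f + ξ) θ ≤ Wfun A b s (f + ξ) θ') (T : ℝ)
    (hT : ∀ j k, qs σ (A k - A j) ((A k - A j).mulVec f + (b k - b j)) ξ ≤ T) (j : Fin M) :
    sqNorm (muV A b (f + ξ) θ - f) ≤ sqNorm ((A j).mulVec (f + ξ) + b j - f) + T := by
  have h1 := first_order A b s (f + ξ) θ hθ hmin j
  rw [W_eq A b s (f + ξ) θ hθ] at h1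
  set y := f + ξ with hy
  set m : Fin M → Fin n → ℝ := fun k => (A k).mulVec y + b k with hm
  have hk : ∀ k, 2 * (ξ ⬝ᵥ m k - ξ ⬝ᵥ m j) - 2 * s * ((A k).trace - (A j).trace)
      - 1 / 2 * (sqNorm (m k) - 2 * (m j ⬝ᵥ m k) + sqNorm (m j)) ≤ T := by
    intro k
    have h := hT j k
    have e : (A k - A j).mulVec ξ + ((A k - A j).mulVec f + (b k - b j)) = m k - m j := by
      simp only [hm, hy, Matrix.sub_mulVec, Matrix.mulVec_add]; abel
    rw [qs, e, dotProduct_sub, sqNorm_sub, dotProduct_comm (m k)] at h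
    have t1 := trace_bound (A k) (A j) (hproj k) (hproj j)
    have t2 := trace_bound (A j) (A k) (hproj j) (hproj k)
    have e2 : (A j - A k) * (A j - A k) = (A k - A j) * (A k - A j) := by noncomm_ring
    rw [e2, Matrix.trace_sub] at t2
    rw [Matrix.trace_sub] at t1 h
    set Z := ((A k - A j) * (A k - A j)).trace
    have habs : |(A k).trace - (A j).trace| ≤ Z := abs_le.2 ⟨by linarith, t1⟩
    have : (σ ^ 2 - s) * ((A k).trace - (A j).trace) ≤ σ ^ 2 / 8 * Z := by
      refine (le_abs_self _).trans ?_
      rw [abs_mul]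
      exact mul_le_mul hs habs (abs_nonneg _) (by positivity)
    linarith
  have havg : ∑ k, θ k * (2 * (ξ ⬝ᵥ m k - ξ ⬝ᵥ m j) - 2 * s * ((A k).trace - (A j).trace)
      - 1 / 2 * (sqNorm (m k) - 2 * (m j ⬝ᵥ m k) + sqNorm (m j))) ≤ T := by
    calc _ ≤ ∑ k, θ k * T := Finset.sum_le_sum fun k _ => mul_le_mul_of_nonneg_left (hk k) (hθ.1 k)
      _ = T := by rw [← Finset.sum_mul, hθ.2, one_mul]
  have hexp : ∀ k, θ k * (2 * (ξ ⬝ᵥ m k - ξ ⬝ᵥ m j) - 2 * s * ((A k).trace - (A j).trace)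
      - 1 / 2 * (sqNorm (m k) - 2 * (m j ⬝ᵥ m k) + sqNorm (m j))) =
      2 * (θ k * (ξ ⬝ᵥ m k)) - 2 * s * (θ k * (A k).trace) - 1 / 2 * (θ k * sqNorm (m k))
       + θ k * (m j ⬝ᵥ m k) + θ k * (-2 * (ξ ⬝ᵥ m j) + 2 * s * (A j).trace - 1 / 2 * sqNorm (m j)) := by
    intro k; ring
  simp only [hexp, Finset.sum_add_distrib, Finset.sum_sub_distrib, ← Finset.mul_sum,
    ← Finset.sum_mul, hθ.2, one_mul] at havg
  have hexp2 : ∀ k, θ k * (-2 * (y ⬝ᵥ m k) + 2 * s * (A k).trace + 1 / 2 * sqNorm (m k)) =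
      -2 * (θ k * (y ⬝ᵥ m k)) + 2 * s * (θ k * (A k).trace) + 1 / 2 * (θ k * sqNorm (m k)) := by
    intro k; ring
  change 1 / 2 * _ + ∑ k, θ k * (-2 * (y ⬝ᵥ m k) + 2 * s * (A k).trace + 1 / 2 * sqNorm (m k))
    + 1 / 2 * sqNorm (_ - m j) ≤ -2 * (y ⬝ᵥ m j) + _ + sqNorm (m j) at h1
  simp only [hexp2, Finset.sum_add_distrib, ← Finset.mul_sum] at h1
  have d1 := dot_muV A b y ξ θ
  have d2 := dot_muV A b y y θ
  have d3 := dot_muV A b y (m j) θ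
  change _ = ∑ k, θ k * (_ ⬝ᵥ m k) at d1 d2 d3
  rw [← d1, ← d3] at havg
  rw [← d2, sqNorm_sub, dotProduct_comm _ (m j)] at h1
  have a1 : y ⬝ᵥ muV A b y θ = f ⬝ᵥ muV A b y θ + ξ ⬝ᵥ muV A b y θ := by
    rw [← add_dotProduct]
  have a2 : y ⬝ᵥ m j = f ⬝ᵥ m j + ξ ⬝ᵥ m j := by
    rw [← add_dotProduct]
  change _ ≤ sqNorm (m j - f) + T
  rw [sqNorm_sub, sqNorm_sub, dotProduct_comm _ f, dotProduct_comm _ f]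
  linarith

/-- **Theorem 6.2**: aggregation of least squares estimators under variance
misspecification. -/
theorem aggregation_variance_misspecification
    {n M : ℕ} (hM : 2 ≤ M) (σ : ℝ) (f : Fin n → ℝ)
    (A : Fin M → Matrix (Fin n) (Fin n) ℝ) (b : Fin M → Fin n → ℝ)
    (hproj : ∀ j, Matrix.transpose (A j) = A j ∧ A j * A j = A j)
    {Ω : Type} [MeasurableSpace Ω] (P : Measure Ω) [IsProbabilityMeasure P]
    (ξ : Ω → Fin n → ℝ) (hξ : Measurable ξ) (hlaw : P.map ξ = gaussPi n σ)
    (σ2hat : Ω → ℝ) (hσ2hatmeas : Measurable σ2hat)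
    (δ : ℝ) (hδdef : δ = (P {ω | σ ^ 2 / 8 < |σ ^ 2 - σ2hat ω|}).toReal)
    (hδ : δ < 1)
    (θhat : Ω → Fin M → ℝ)
    (hθmem : ∀ ω, θhat ω ∈ simplex M)
    (hθmin : ∀ ω, ∀ θ ∈ simplex M,
      Wfun A b (σ2hat ω) (f + ξ ω) (θhat ω) ≤ Wfun A b (σ2hat ω) (f + ξ ω) θ) :
    ∀ x : ℝ, 0 < x →
      ENNReal.ofReal (1 - δ - 2 * Real.exp (-x)) ≤
        P {ω | ∀ j, sqNorm (muV A b (f + ξ ω) (θhat ω) - f) ≤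
            sqNorm ((A j).mulVec (f + ξ ω) + b j - f)
              + 64 * σ ^ 2 * (x + 2 * Real.log M)} := by
  intro x hx
  set v : Fin M → Fin M → Fin n → ℝ := fun j k => (A k - A j).mulVec f + (b k - b j) with hv
  set s := x + 2 * Real.log M with hs
  set E0 : Set Ω := {ω | σ ^ 2 / 8 < |σ ^ 2 - σ2hat ω|} with hE0
  set E : Fin M × Fin M → Set Ω := fun p =>
    {ω | 64 * σ ^ 2 * s < qs σ (A p.2 - A p.1) (v p.1 p.2) (ξ ω)} with hE
  have hE0m : MeasurableSet E0 := measurableSet_lt measurable_const (by fun_prop)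
  have hEm : ∀ p, MeasurableSet (E p) := fun p =>
    measurableSet_lt measurable_const ((measurable_qs σ _ _).comp hξ)
  have hPE : ∀ p, P (E p) ≤ ENNReal.ofReal (Real.exp (-s)) := by
    intro p
    have h := gauss_tail σ (A p.2) (A p.1) (hproj p.2) (hproj p.1) (v p.1 p.2) s
    rw [← hlaw, Measure.map_apply hξ
      (measurableSet_lt measurable_const (measurable_qs σ _ _))] at h
    exact h
  have hU : P (⋃ p, E p) ≤ ENNReal.ofReal (Real.exp (-x)) := by
    refine (measure_iUnion_fintype_le _ _).trans ?_
    refine (Finset.sum_le_sum fun p _ => hPE p).trans ?_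
    rw [Finset.sum_const, Finset.card_univ, Fintype.card_prod, Fintype.card_fin,
      ← ENNReal.ofReal_nsmul]
    apply ENNReal.ofReal_le_ofReal
    have hMpos : (0 : ℝ) < M := by positivity
    have : Real.exp (-s) = Real.exp (-x) / (M * M) := by
      rw [hs, show -(x + 2 * Real.log M) = -x - (Real.log M + Real.log M) by ring, Real.exp_sub,
        Real.exp_add, Real.exp_log hMpos]
    rw [this, nsmul_eq_mul]
    push_cast
    apply le_of_eq
    field_simp
  have hbad : P (E0 ∪ ⋃ p, E p) ≤ ENNReal.ofReal (δ + Real.exp (-x)) := by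
    refine (measure_union_le _ _).trans ?_
    rw [ENNReal.ofReal_add (by rw [hδdef]; exact ENNReal.toReal_nonneg) (Real.exp_pos _).le]
    refine add_le_add ?_ hU
    rw [hδdef, ENNReal.ofReal_toReal (measure_ne_top _ _)]
  have hsub : (E0 ∪ ⋃ p, E p)ᶜ ⊆ {ω | ∀ j, sqNorm (muV A b (f + ξ ω) (θhat ω) - f) ≤
            sqNorm ((A j).mulVec (f + ξ ω) + b j - f) + 64 * σ ^ 2 * s} := by
    intro ω hω j
    simp only [Set.mem_compl_iff, Set.mem_union, Set.mem_iUnion, not_or, not_exists] at hω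
    refine deterministic σ f (ξ ω) A b hproj (σ2hat ω) (not_lt.1 hω.1) (θhat ω) (hθmem ω)
      (hθmin ω) _ (fun j k => ?_) j
    exact not_lt.1 (hω.2 (j, k))
  refine le_trans ?_ (measure_mono hsub)
  rw [prob_compl_eq_one_sub (hE0m.union (MeasurableSet.iUnion hEm))]
  refine le_trans ?_ (tsub_le_tsub_left hbad 1)
  rw [← ENNReal.ofReal_one, ← ENNReal.ofReal_sub _ (add_nonneg
    (by rw [hδdef]; exact ENNReal.toReal_nonneg) (Real.exp_pos _).le)]
  apply ENNReal.ofReal_le_ofReal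
  have := Real.exp_pos (-x)
  linarith

end
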